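/- Let I₇ = (24/(7√7)) ∫_{π/3}^{π/2} ln|(tan θ + √7)/(tan θ - √7)| dθ and φ₇ = arctan(√7). Then I₇ = (4/(7√7))[3·Cl₂(2φ₇) - 3·Cl₂(4φ₇) + Cl₂(6φ₇)]. -/

import Mathlib

/-!
Put `L θ = log (2 - 2 cos θ) / 2 = log |2 sin (θ / 2)|`. For `0 ≤ r < 1` the power series of
`-log (1 - z)` at `z = r e^{iθ}` integrates term by term over `[a, b]`, and letting `r → 1` by
dominated convergence (`|1 - r e^{iθ}|` lies between `|sin θ|` and `2`) gives
`∫ θ in a..b, L θ = Cl2 a - Cl2 b`, which is `integral_logChord`.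

With `φ = arctan √7` the ratio in the integrand is `sin (θ + φ) / sin (θ - φ)`, so the integrand is
`L (2θ + 2φ) - L (2θ - 2φ)` away from `θ = φ` and `θ = π / 2`. The integral is thus a combination of
values of `Cl2` at `π ± 2φ` and `2π/3 ± 2φ`, and these reduce to `Cl2 (2φ)`, `Cl2 (4φ)` and
`Cl2 (6φ)` by the duplication and triplication formulas, which hold because
`∑_{j < k} sin (n (x + 2πj/k))` is `k sin (n x)` if `k ∣ n` and `0` otherwise.
-/

open Real

noncomputable def Cl2 (θ : ℝ) : ℝ := ∑' m : ℕ, Real.sin ((m + 1) * θ) / (m + 1) ^ 2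

open MeasureTheory Filter Topology

/-! ### Clausen series -/

lemma summable_clausen (x : ℝ) : Summable fun n : ℕ => Real.sin (n * x) / (n : ℝ) ^ 2 := by
  refine Summable.of_norm_bounded (Real.summable_one_div_nat_pow.2 one_lt_two) fun n => ?_
  rw [norm_div, Real.norm_eq_abs, norm_pow, Real.norm_natCast]
  gcongr
  exact Real.abs_sin_le_one _

/-- The term with index `0` vanishes because `0 / 0 = 0`. -/
lemma Cl2_eq (x : ℝ) : Cl2 x = ∑' n : ℕ, Real.sin (n * x) / (n : ℝ) ^ 2 := by
  rw [(summable_clausen x).tsum_eq_zero_add]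
  simp [Cl2]

lemma Cl2_neg (x : ℝ) : Cl2 (-x) = -Cl2 x := by
  simp only [Cl2, mul_neg, Real.sin_neg, neg_div, tsum_neg]

/-- Keeping only the terms of `Cl2 x` whose index is a multiple of `k`. -/
lemma tsum_multiples (k : ℕ) (hk : 0 < k) (x : ℝ) :
    ∑' n : ℕ, (if k ∣ n then (k : ℝ) else 0) * (Real.sin (n * x) / (n : ℝ) ^ 2)
      = Cl2 (k * x) / k := by
  have hinj : Function.Injective fun m : ℕ => k * m := fun a b h => Nat.eq_of_mul_eq_mul_left hk h
  rw [← hinj.tsum_eq, Cl2_eq, ← tsum_div_const]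
  · refine tsum_congr fun m => ?_
    have : (k : ℝ) ≠ 0 := by positivity
    rcases eq_or_ne m 0 with rfl | hm
    · simp
    have hm' : (m : ℝ) ≠ 0 := by exact_mod_cast hm
    simp only [dvd_mul_right, if_true, Nat.cast_mul]
    rw [show (k : ℝ) * m * x = m * (k * x) by ring]
    field_simp
  · intro n hn
    by_cases h : k ∣ n
    · obtain ⟨m, rfl⟩ := h
      exact ⟨m, rfl⟩
    · simp [h] at hn

lemma Cl2_duplication (x : ℝ) : Cl2 x + Cl2 (x + π) = Cl2 (2 * x) / 2 := by
  have h := tsum_multiples 2 two_pos x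
  push_cast at h
  rw [← h, Cl2_eq, Cl2_eq, ← (summable_clausen _).tsum_add (summable_clausen _)]
  refine tsum_congr fun n => ?_
  rw [← add_div, ← mul_div_assoc]
  congr 1
  rw [mul_add, Real.sin_add_nat_mul_pi]
  split_ifs with hn
  · rw [(even_iff_two_dvd.2 hn).neg_one_pow]; ring
  · rw [(Nat.not_even_iff_odd.1 (fun h => hn (even_iff_two_dvd.1 h))).neg_one_pow]; ring

lemma Cl2_triplication (x : ℝ) :
    Cl2 x + Cl2 (x + 2 * π / 3) + Cl2 (x - 2 * π / 3) = Cl2 (3 * x) / 3 := by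
  have h := tsum_multiples 3 three_pos x
  push_cast at h
  rw [← h, Cl2_eq, Cl2_eq, Cl2_eq, ← (summable_clausen _).tsum_add (summable_clausen _),
    ← ((summable_clausen _).add (summable_clausen _)).tsum_add (summable_clausen _)]
  refine tsum_congr fun n => ?_
  rw [← add_div, ← add_div, ← mul_div_assoc]
  congr 1
  rw [mul_add, mul_sub, Real.sin_add, Real.sin_sub]
  have c23 : Real.cos (2 * π / 3) = -1 / 2 := by
    rw [show 2 * π / 3 = π - π / 3 by ring, Real.cos_pi_sub, Real.cos_pi_div_three]; ring
  obtain ⟨q, hq⟩ : ∃ q, q = n / 3 := ⟨_, rfl⟩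
  have hcase : n = 3 * q ∨ n = 3 * q + 1 ∨ n = 3 * q + 2 := by omega
  have key : 1 + 2 * Real.cos (n * (2 * π / 3)) = if 3 ∣ n then 3 else 0 := by
    rcases hcase with h | h | h
    · rw [if_pos ⟨q, h⟩, h]
      push_cast
      rw [show (3 * (q : ℝ)) * (2 * π / 3) = q * (2 * π) by ring, Real.cos_nat_mul_two_pi]
      norm_num
    · rw [if_neg (by omega), h]
      push_cast
      rw [show (3 * (q : ℝ) + 1) * (2 * π / 3) = 2 * π / 3 + q * (2 * π) by ring,
        Real.cos_add_nat_mul_two_pi, c23]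
      norm_num
    · rw [if_neg (by omega), h]
      push_cast
      rw [show (3 * (q : ℝ) + 2) * (2 * π / 3) = -(2 * π / 3) + ((q + 1 : ℕ) : ℝ) * (2 * π) by
          push_cast; ring,
        Real.cos_add_nat_mul_two_pi, Real.cos_neg, c23]
      norm_num
  rw [← key]
  ring

lemma Cl2_add_two_pi (x : ℝ) : Cl2 (x + 2 * π) = Cl2 x := by
  rw [Cl2_eq, Cl2_eq]
  refine tsum_congr fun n => ?_
  rw [mul_add, Real.sin_add_nat_mul_two_pi]

/-! ### The integral representation -/

/-- The logarithm of the chord `|1 - e^{iθ}| = |2 sin (θ / 2)|`, with value `0` at multiples of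
`2π`, where `Real.log 0 = 0`. -/
noncomputable def logChord (θ : ℝ) : ℝ := Real.log (2 - 2 * Real.cos θ) / 2

lemma logChord_two_mul (x : ℝ) : logChord (2 * x) = Real.log |2 * Real.sin x| := by
  rw [logChord, show 2 - 2 * Real.cos (2 * x) = (2 * Real.sin x) ^ 2 by
    rw [Real.cos_two_mul, mul_pow, Real.sin_sq]; ring, Real.log_pow, Real.log_abs]
  push_cast; ring

/-- The Fourier series of `-log |1 - r e^{iθ}|`. -/
lemma hasSum_log_disc {r : ℝ} (h0 : 0 ≤ r) (h1 : r < 1) (θ : ℝ) :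
    HasSum (fun n : ℕ => r ^ n * Real.cos (n * θ) / n)
      (-(Real.log (1 - 2 * r * Real.cos θ + r ^ 2) / 2)) := by
  set z : ℂ := r * Complex.exp (θ * Complex.I) with hz
  have hn : ‖z‖ < 1 := by
    rw [hz, norm_mul, Complex.norm_exp_ofReal_mul_I, mul_one, Complex.norm_real,
      Real.norm_of_nonneg h0]
    exact h1
  have h := Complex.hasSum_re (Complex.hasSum_taylorSeries_neg_log hn)
  convert! h using 1
  · ext n
    rw [hz, mul_pow, ← Complex.exp_nat_mul, ← mul_assoc, ← Complex.ofReal_natCast,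
      ← Complex.ofReal_mul, ← Complex.ofReal_pow, Complex.div_ofReal_re, Complex.re_ofReal_mul,
      Complex.exp_ofReal_mul_I_re]
  · have hsq : 1 - 2 * r * Real.cos θ + r ^ 2 = ‖1 - z‖ ^ 2 := by
      rw [← Complex.normSq_eq_norm_sq, Complex.normSq_apply]
      have hre : z.re = r * Real.cos θ := by
        rw [hz, Complex.re_ofReal_mul, Complex.exp_ofReal_mul_I_re]
      have him : z.im = r * Real.sin θ := by
        rw [hz, Complex.im_ofReal_mul, Complex.exp_ofReal_mul_I_im]
      simp only [Complex.sub_re, Complex.sub_im, Complex.one_re, Complex.one_im, hre, him]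
      linear_combination (-r ^ 2) * Real.sin_sq_add_cos_sq θ
    rw [Complex.neg_re, Complex.log_re, hsq, Real.log_pow]
    push_cast; ring

lemma integral_log_disc {r : ℝ} (h0 : 0 ≤ r) (h1 : r < 1) (a b : ℝ) :
    ∫ θ in a..b, Real.log (1 - 2 * r * Real.cos θ + r ^ 2) / 2 =
      (∑' n : ℕ, r ^ n * (Real.sin (n * a) / (n : ℝ) ^ 2))
        - ∑' n : ℕ, r ^ n * (Real.sin (n * b) / (n : ℝ) ^ 2) := by
  have hs (x : ℝ) : Summable fun n : ℕ => r ^ n * (Real.sin (n * x) / (n : ℝ) ^ 2) := by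
    refine Summable.of_norm_bounded (summable_clausen x).norm fun n => ?_
    rw [norm_mul, norm_pow, Real.norm_of_nonneg h0]
    exact mul_le_of_le_one_left (norm_nonneg _) (pow_le_one₀ h0 h1.le)
  have h := intervalIntegral.hasSum_integral_of_dominated_convergence (μ := volume) (a := a) (b := b)
    (F := fun (n : ℕ) θ => r ^ n * Real.cos (n * θ) / n)
    (f := fun θ => -(Real.log (1 - 2 * r * Real.cos θ + r ^ 2) / 2))
    (fun n _ => r ^ n)
    (fun n => (by fun_prop : Continuous fun θ : ℝ =>
      r ^ n * Real.cos (n * θ) / n).aestronglyMeasurable)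
    (fun n => ae_of_all _ fun θ _ => by
      rcases n.eq_zero_or_pos with rfl | hn
      · simp
      have hn' : (1 : ℝ) ≤ n := by exact_mod_cast hn
      rw [norm_div, norm_mul, norm_pow, Real.norm_of_nonneg h0, Real.norm_natCast, Real.norm_eq_abs]
      refine (div_le_self (by positivity) hn').trans ?_
      exact mul_le_of_le_one_right (by positivity) (Real.abs_cos_le_one _))
    (ae_of_all _ fun _ _ => summable_geometric_of_lt_one h0 h1)
    intervalIntegrable_const
    (ae_of_all _ fun θ _ => hasSum_log_disc h0 h1 θ)
  rw [intervalIntegral.integral_neg] at h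
  rw [← neg_neg (∫ θ in a..b, _), ← h.tsum_eq, ← (hs a).tsum_sub (hs b), ← tsum_neg]
  refine tsum_congr fun n => ?_
  rcases n.eq_zero_or_pos with rfl | hn
  · simp
  have hn' : (n : ℝ) ≠ 0 := by positivity
  rw [intervalIntegral.integral_div, intervalIntegral.integral_const_mul,
    intervalIntegral.integral_comp_mul_left (fun x => Real.cos x) hn', integral_cos, smul_eq_mul]
  field_simp
  ring

lemma ae_sin_ne_zero : ∀ᵐ θ : ℝ, Real.sin θ ≠ 0 := by
  have : (Set.range fun n : ℤ => (n : ℝ) * π).Countable := Set.countable_range _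
  filter_upwards [this.ae_notMem volume] with θ hθ h
  exact hθ (Real.sin_eq_zero_iff.1 h)

/-- The Clausen series is the radial limit of its power series, by absolute convergence. -/
lemma tendsto_tsum_clausen (x : ℝ) :
    Tendsto (fun r : ℝ => ∑' n : ℕ, r ^ n * (Real.sin (n * x) / (n : ℝ) ^ 2)) (𝓝[<] 1)
      (𝓝 (Cl2 x)) := by
  rw [Cl2_eq]
  refine tendsto_tsum_of_dominated_convergence (summable_clausen x).norm (fun n => ?_) ?_
  · have : Continuous fun r : ℝ => r ^ n * (Real.sin (n * x) / (n : ℝ) ^ 2) := by fun_prop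
    simpa using (this.tendsto 1).mono_left nhdsWithin_le_nhds
  · filter_upwards [Ioo_mem_nhdsLT (zero_lt_one (α := ℝ))] with r hr n
    rw [norm_mul, norm_pow, Real.norm_of_nonneg hr.1.le]
    exact mul_le_of_le_one_left (norm_nonneg _) (pow_le_one₀ hr.1.le hr.2.le)

lemma integral_logChord (a b : ℝ) : ∫ θ in a..b, logChord θ = Cl2 a - Cl2 b := by
  have hR := (tendsto_tsum_clausen a).sub (tendsto_tsum_clausen b)
  have hL : Tendsto (fun r : ℝ => ∫ θ in a..b, Real.log (1 - 2 * r * Real.cos θ + r ^ 2) / 2)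
      (𝓝[<] 1) (𝓝 (∫ θ in a..b, logChord θ)) := by
    refine intervalIntegral.tendsto_integral_filter_of_dominated_convergence
      (fun θ => ‖Real.log (Real.sin θ)‖ + Real.log 2) ?_ ?_ ?_ ?_
    · exact Eventually.of_forall fun r => (Measurable.div_const
        (Real.measurable_log.comp (by fun_prop)) 2).aestronglyMeasurable
    · filter_upwards [Ioo_mem_nhdsLT (zero_lt_one (α := ℝ))] with r hr
      filter_upwards [ae_sin_ne_zero] with θ hθ _
      have hpos : 0 < Real.sin θ ^ 2 := by positivity
      have hsc := Real.sin_sq_add_cos_sq θ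
      -- `1 - 2 r cos θ + r² = (r - cos θ)² + sin² θ`
      have hlow : Real.sin θ ^ 2 ≤ 1 - 2 * r * Real.cos θ + r ^ 2 := by
        nlinarith [sq_nonneg (r - Real.cos θ)]
      have hup : 1 - 2 * r * Real.cos θ + r ^ 2 ≤ 2 ^ 2 := by
        nlinarith [Real.neg_one_le_cos θ, hr.1, hr.2]
      have l1 := Real.log_le_log hpos hlow
      have l2 := Real.log_le_log (hpos.trans_le hlow) hup
      rw [Real.log_pow] at l1 l2
      push_cast at l1 l2
      have hl2 : 0 < Real.log 2 := Real.log_pos one_lt_two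
      rw [Real.norm_eq_abs, Real.norm_eq_abs, abs_le]
      constructor
      · linarith [neg_abs_le (Real.log (Real.sin θ))]
      · linarith [abs_nonneg (Real.log (Real.sin θ))]
    · exact (intervalIntegrable_log_sin (a := a) (b := b)).norm.add intervalIntegrable_const
    -- `sin θ ≠ 0` rules out `cos θ = 1`, the only obstruction to continuity of the logarithm.
    · filter_upwards [ae_sin_ne_zero] with θ hθ _
      have hne : 1 - 2 * 1 * Real.cos θ + 1 ^ 2 ≠ 0 := fun h => hθ (by
        have hc : Real.cos θ = 1 := by linarith
        have := Real.sin_sq_add_cos_sq θ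
        rw [hc] at this
        exact pow_eq_zero_iff two_ne_zero |>.1 (by linarith))
      have hc : ContinuousAt
          (fun r : ℝ => Real.log (1 - 2 * r * Real.cos θ + r ^ 2) / 2) 1 :=
        (ContinuousAt.log (f := fun r : ℝ => 1 - 2 * r * Real.cos θ + r ^ 2)
          (by fun_prop) hne).div_const 2
      have := hc.tendsto.mono_left (nhdsWithin_le_nhds (s := Set.Iio 1))
      convert! this using 2
      rw [logChord]
      congr 2
      ring
  refine tendsto_nhds_unique hL (hR.congr' ?_)
  filter_upwards [Ioo_mem_nhdsLT (zero_lt_one (α := ℝ))] with r hr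
  exact (integral_log_disc hr.1.le hr.2 a b).symm

lemma intervalIntegrable_logChord_affine (a b d : ℝ) :
    IntervalIntegrable (fun θ => logChord (2 * θ + d)) volume a b := by
  have h : IntervalIntegrable (Real.log ∘ fun θ => 2 * Real.sin (θ + d / 2)) volume a b :=
    MeromorphicOn.intervalIntegrable_log fun x _ =>
      (by fun_prop : AnalyticAt ℝ (fun θ => 2 * Real.sin (θ + d / 2)) x).meromorphicAt
  refine h.congr fun x _ => ?_
  rw [show 2 * x + d = 2 * (x + d / 2) by ring, logChord_two_mul, Real.log_abs]
  rfl

/-! ### The integral of the tangent quotient -/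

/-- The quotient is `sin (θ + φ) / sin (θ - φ)`. -/
lemma log_tan_quotient {θ φ : ℝ} (hθ : Real.cos θ ≠ 0) (hφ : Real.cos φ ≠ 0)
    (hs : Real.sin (θ + φ) ≠ 0) (hd : Real.sin (θ - φ) ≠ 0) :
    Real.log |(Real.tan θ + Real.tan φ) / (Real.tan θ - Real.tan φ)| =
      logChord (2 * θ + 2 * φ) - logChord (2 * θ + -(2 * φ)) := by
  rw [show 2 * θ + 2 * φ = 2 * (θ + φ) by ring, show 2 * θ + -(2 * φ) = 2 * (θ - φ) by ring,
    logChord_two_mul, logChord_two_mul, ← Real.log_div (by positivity) (by positivity), ← abs_div]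
  congr 2
  have h1 : Real.tan θ + Real.tan φ = Real.sin (θ + φ) / (Real.cos θ * Real.cos φ) := by
    rw [Real.tan_eq_sin_div_cos, Real.tan_eq_sin_div_cos, Real.sin_add]
    field_simp
  have h2 : Real.tan θ - Real.tan φ = Real.sin (θ - φ) / (Real.cos θ * Real.cos φ) := by
    rw [Real.tan_eq_sin_div_cos, Real.tan_eq_sin_div_cos, Real.sin_sub]
    field_simp
  rw [h1, h2]
  field_simp

theorem stmt16 :
    (24 / (7 * Real.sqrt 7)) *
        ∫ θ in (π / 3)..(π / 2),
          Real.log |(Real.tan θ + Real.sqrt 7) / (Real.tan θ - Real.sqrt 7)| =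
      (4 / (7 * Real.sqrt 7)) *
        (3 * Cl2 (2 * Real.arctan (Real.sqrt 7))
          - 3 * Cl2 (4 * Real.arctan (Real.sqrt 7))
          + Cl2 (6 * Real.arctan (Real.sqrt 7))) := by
  set φ := Real.arctan (Real.sqrt 7) with hφ
  have ht : Real.sqrt 7 = Real.tan φ := (Real.tan_arctan _).symm
  have hφ0 : 0 < φ := Real.arctan_pos.2 (by positivity)
  have hφ1 : φ < π / 2 := Real.arctan_lt_pi_div_two _
  have hpi := Real.pi_pos
  -- At `θ = φ` and `θ = π / 2` the two integrands may differ, because of division by zero.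
  have hI : ∫ θ in (π / 3)..(π / 2),
      Real.log |(Real.tan θ + Real.sqrt 7) / (Real.tan θ - Real.sqrt 7)| =
      ∫ θ in (π / 3)..(π / 2), (logChord (2 * θ + 2 * φ) - logChord (2 * θ + -(2 * φ))) := by
    have hae : ∀ᵐ θ : ℝ, θ ∉ ({φ, π / 2} : Set ℝ) :=
      (Set.toFinite {φ, π / 2}).countable.ae_notMem volume
    refine intervalIntegral.integral_congr_ae ?_
    filter_upwards [hae] with θ hθ hmem
    rw [Set.uIoc_of_le (by linarith)] at hmem
    simp only [Set.mem_insert_iff, Set.mem_singleton_iff, not_or] at hθ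
    have hlt : θ < π / 2 := lt_of_le_of_ne hmem.2 hθ.2
    have hgt : π / 3 < θ := hmem.1
    rw [ht]
    refine log_tan_quotient (Real.cos_pos_of_mem_Ioo ⟨by linarith, hlt⟩).ne'
      (Real.cos_arctan_pos _).ne'
      (Real.sin_pos_of_pos_of_lt_pi (by linarith) (by linarith)).ne' ?_
    rw [Ne, Real.sin_eq_zero_iff_of_lt_of_lt (by linarith) (by linarith)]
    exact sub_ne_zero.2 hθ.1
  have hI2 : ∫ θ in (π / 3)..(π / 2),
      Real.log |(Real.tan θ + Real.sqrt 7) / (Real.tan θ - Real.sqrt 7)| =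
      (Cl2 (2 * π / 3 + 2 * φ) - Cl2 (π + 2 * φ)) / 2
        - (Cl2 (2 * π / 3 - 2 * φ) - Cl2 (π - 2 * φ)) / 2 := by
    rw [hI, intervalIntegral.integral_sub (intervalIntegrable_logChord_affine _ _ _)
      (intervalIntegrable_logChord_affine _ _ _),
      intervalIntegral.integral_comp_mul_add logChord two_ne_zero,
      intervalIntegral.integral_comp_mul_add logChord two_ne_zero,
      integral_logChord, integral_logChord, smul_eq_mul, smul_eq_mul]
    rw [show 2 * (π / 3) + 2 * φ = 2 * π / 3 + 2 * φ by ring,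
      show 2 * (π / 2) + 2 * φ = π + 2 * φ by ring,
      show 2 * (π / 3) + -(2 * φ) = 2 * π / 3 - 2 * φ by ring,
      show 2 * (π / 2) + -(2 * φ) = π - 2 * φ by ring]
    ring
  have d := Cl2_duplication (2 * φ)
  have t := Cl2_triplication (2 * φ)
  have e1 : Cl2 (2 * π / 3 - 2 * φ) = -Cl2 (2 * φ - 2 * π / 3) := by
    rw [← Cl2_neg]; congr 1; ring
  have e2 : Cl2 (π - 2 * φ) = -Cl2 (2 * φ + π) := by
    rw [← Cl2_neg, ← Cl2_add_two_pi (-(2 * φ + π))]; congr 1; ring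
  rw [show 2 * (2 * φ) = 4 * φ by ring] at d
  rw [show 3 * (2 * φ) = 6 * φ by ring] at t
  rw [hI2, e1, e2, add_comm π, add_comm (2 * π / 3)]
  linear_combination (12 / (7 * Real.sqrt 7)) * t - (24 / (7 * Real.sqrt 7)) * d
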